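/- Let {G_m}_{m∈ℕ} be a sequence of N×N real matrix polynomials with deg G_m = m, nonsingular leading coefficients, and G_0 = I_{N×N}. Then the following are equivalent: (a) there exists a linear map W : ℝ[x] → M_N(ℝ), with moments S_k := W(x^k), such that ∫x^k dW(x)·G_m(x) := Σ_j S_{k+j}·G_{m,j} (where G_m(x) = Σ_j G_{m,j}x^j) equals Ω_m·δ_{k,m} for all 0 ≤ k ≤ m and all m, with each Ω_m a nonsingular lower triangular matrix; (b) there exist sequences of N×N matrices {A_m}, {B_m}, {C_m}, with each A_m nonsingular lower triangular and each C_m (m ≥ 1) nonsingular, such that z·G_m(z) = G_{m−1}(z)·A_{m−1} + G_m(z)·B_m + G_{m+1}(z)·C_{m+1} for every m ≥ 0, with G_{−1} := 0. Moreover, in that case Ω_m = Ω_0·A_0·A_1⋯A_{m−1}. -/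

import Mathlib

open Polynomial Matrix Finset

noncomputable section

abbrev Mat (N : ℕ) := Matrix (Fin N) (Fin N) ℝ

/-- `N×N` real matrix polynomials. -/
abbrev MatPoly (N : ℕ) := Polynomial (Mat N)

def UpperTri {N : ℕ} {R : Type*} [Zero R] (A : Matrix (Fin N) (Fin N) R) : Prop :=
  ∀ i j : Fin N, (j : ℕ) < (i : ℕ) → A i j = 0

def LowerTri {N : ℕ} {R : Type*} [Zero R] (A : Matrix (Fin N) (Fin N) R) : Prop :=
  ∀ i j : Fin N, (i : ℕ) < (j : ℕ) → A i j = 0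

/-- The right pairing `∫ x^k dW(x) G_m(x) = ∑_j S_{k+j} G_{m,j}`, where `S_i = W(x^i)`
and `G_m` has degree `m`. -/
def rightPair (N : ℕ) (W : Polynomial ℝ →ₗ[ℝ] Mat N) (G : MatPoly N) (m k : ℕ) : Mat N :=
  ∑ j ∈ Finset.range (m + 1), W (X ^ (k + j)) * G.coeff j

/-- The functional `∑ j, x^j a_j ↦ ∑ j, S_j a_j` with moment sequence `S`. -/
def momentFunctional {R : Type*} [Ring R] (S : ℕ → R) (P : R[X]) : R :=
  P.sum fun j a => S j * a

section MomentFunctional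

variable {R : Type*} [Ring R] (S : ℕ → R)

theorem momentFunctional_add (P Q : R[X]) :
    momentFunctional S (P + Q) = momentFunctional S P + momentFunctional S Q :=
  Polynomial.sum_add_index P Q _ (fun _ => mul_zero _) (fun _ _ _ => mul_add _ _ _)

theorem momentFunctional_sub (P Q : R[X]) :
    momentFunctional S (P - Q) = momentFunctional S P - momentFunctional S Q := by
  rw [eq_sub_iff_add_eq, ← momentFunctional_add, sub_add_cancel]

theorem momentFunctional_monomial (n : ℕ) (a : R) :
    momentFunctional S (monomial n a) = S n * a :=
  Polynomial.sum_monomial_index a _ (mul_zero _)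

theorem momentFunctional_mul_C (P : R[X]) (a : R) :
    momentFunctional S (P * C a) = momentFunctional S P * a := by
  induction P using Polynomial.induction_on' with
  | add p q hp hq => rw [add_mul, momentFunctional_add, hp, hq, momentFunctional_add, add_mul]
  | monomial n b =>
    rw [monomial_mul_C, momentFunctional_monomial, momentFunctional_monomial, mul_assoc]

theorem momentFunctional_X_pow_mul (k : ℕ) (P : R[X]) :
    momentFunctional S (X ^ k * P) = momentFunctional (fun j => S (k + j)) P := by
  induction P using Polynomial.induction_on' with
  | add p q hp hq => rw [mul_add, momentFunctional_add, hp, hq, momentFunctional_add]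
  | monomial n b =>
    rw [X_pow_mul_monomial, momentFunctional_monomial, momentFunctional_monomial, add_comm n k]

theorem momentFunctional_X_pow_mul_X_mul (k : ℕ) (P : R[X]) :
    momentFunctional S (X ^ k * (X * P)) = momentFunctional S (X ^ (k + 1) * P) := by
  rw [pow_succ, mul_assoc]

theorem momentFunctional_X_pow_mul_mul_C (k : ℕ) (P : R[X]) (a : R) :
    momentFunctional S (X ^ k * (P * C a)) = momentFunctional S (X ^ k * P) * a := by
  rw [← mul_assoc, momentFunctional_mul_C]

theorem momentFunctional_eq_sum_range {n : ℕ} {P : R[X]} (hP : P.natDegree ≤ n) :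
    momentFunctional S P = ∑ j ∈ Finset.range (n + 1), S j * P.coeff j :=
  Polynomial.sum_over_range' P (fun _ => mul_zero _) _ (Nat.lt_succ_of_le hP)

end MomentFunctional

theorem lowerTri_iff_blockTriangular {N : ℕ} {R : Type*} [Zero R]
    {A : Matrix (Fin N) (Fin N) R} : LowerTri A ↔ A.BlockTriangular OrderDual.toDual :=
  Iff.rfl

theorem LowerTri.mul {N : ℕ} {A B : Mat N} (hA : LowerTri A) (hB : LowerTri B) :
    LowerTri (A * B) :=
  lowerTri_iff_blockTriangular.2 (BlockTriangular.mul hA hB)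

theorem LowerTri.inv {N : ℕ} {A : Mat N} (hA : LowerTri A) (hdet : IsUnit A.det) :
    LowerTri A⁻¹ := by
  have := A.invertibleOfIsUnitDet hdet
  exact lowerTri_iff_blockTriangular.2 (blockTriangular_inv_of_blockTriangular hA)

theorem lowerTri_one {N : ℕ} : LowerTri (1 : Mat N) :=
  fun _ _ h => Matrix.one_apply_ne (Fin.ne_of_lt h)

theorem rightPair_eq_momentFunctional {N : ℕ} (W : ℝ[X] →ₗ[ℝ] Mat N) {P : MatPoly N} {m : ℕ}
    (hP : P.natDegree ≤ m) (k : ℕ) :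
    rightPair N W P m k = momentFunctional (fun i => W (X ^ i)) (X ^ k * P) := by
  rw [momentFunctional_X_pow_mul, momentFunctional_eq_sum_range _ hP, rightPair]

section Recurrence

variable {N : ℕ} {G : ℕ → MatPoly N}

/-- Right-orthogonality of the family `G` with respect to the moment sequence `S`. -/
def RightOrthogonal (S : ℕ → Mat N) (G : ℕ → MatPoly N) (Ω : ℕ → Mat N) : Prop :=
  ∀ m k, k ≤ m → momentFunctional S (X ^ k * G m) = if k = m then Ω m else 0

/-- The three-term recurrence with coefficients acting on the right. -/
def ThreeTermRecurrence (G : ℕ → MatPoly N) (A B D : ℕ → Mat N) : Prop :=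
  ∀ m, X * G m = (if m = 0 then 0 else G (m - 1) * C (A (m - 1))) + G m * C (B m)
    + G (m + 1) * C (D (m + 1))

theorem RightOrthogonal.eq_zero {S Ω : ℕ → Mat N} (h : RightOrthogonal S G Ω) {m k : ℕ}
    (hk : k < m) : momentFunctional S (X ^ k * G m) = 0 := by
  rw [h m k hk.le, if_neg hk.ne]

theorem RightOrthogonal.eq_self {S Ω : ℕ → Mat N} (h : RightOrthogonal S G Ω) (m : ℕ) :
    momentFunctional S (X ^ m * G m) = Ω m := by
  rw [h m m le_rfl, if_pos rfl]

theorem degree_sub_mul_C_inv_lt (hGdeg : ∀ m, (G m).natDegree = m)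
    (hGlead : ∀ m, IsUnit ((G m).coeff m).det) {n : ℕ} {P : MatPoly N}
    (hP : P.degree < (n + 1 : ℕ)) :
    (P - G n * C (((G n).coeff n)⁻¹ * P.coeff n)).degree < (n : ℕ) := by
  rw [Polynomial.degree_lt_iff_coeff_zero] at hP ⊢
  intro j hj
  rw [coeff_sub, coeff_mul_C]
  rcases hj.eq_or_lt with rfl | hj
  · rw [mul_nonsing_inv_cancel_left _ _ (hGlead _), sub_self]
  · rw [hP j hj, coeff_eq_zero_of_natDegree_lt ((hGdeg n).trans_lt hj), zero_mul, sub_zero]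

/-- A matrix polynomial of degree less than `n` whose first `n` right moments vanish is zero. -/
theorem RightOrthogonal.eq_zero_of_degree_lt {S Ω : ℕ → Mat N} (h : RightOrthogonal S G Ω)
    (hΩ : ∀ m, IsUnit (Ω m).det) (hGdeg : ∀ m, (G m).natDegree = m)
    (hGlead : ∀ m, IsUnit ((G m).coeff m).det) (n : ℕ) :
    ∀ P : MatPoly N, P.degree < (n : ℕ) →
      (∀ k < n, momentFunctional S (X ^ k * P) = 0) → P = 0 := by
  induction n with
  | zero =>
    intro P hP _
    ext1 j
    exact (Polynomial.degree_lt_iff_coeff_zero P 0).1 hP j (Nat.zero_le j)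
  | succ n ih =>
    intro P hP hmom
    have hdeg := degree_sub_mul_C_inv_lt hGdeg hGlead hP
    set D := ((G n).coeff n)⁻¹ * P.coeff n
    have hPD : P = G n * C D := by
      refine sub_eq_zero.1 (ih _ hdeg fun k hk => ?_)
      rw [mul_sub, momentFunctional_sub, momentFunctional_X_pow_mul_mul_C, hmom k (by omega),
        h.eq_zero hk, zero_mul, sub_zero]
    have hD : Ω n * D = 0 := by
      rw [← h.eq_self n, ← momentFunctional_X_pow_mul_mul_C, ← hPD, hmom n n.lt_succ_self]
    have : D = 0 := by
      rw [← nonsing_inv_mul_cancel_left _ D (hΩ n), hD, mul_zero]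
    rw [hPD, this, C_0, mul_zero]

theorem RightOrthogonal.exists_threeTermRecurrence {S Ω : ℕ → Mat N} (h : RightOrthogonal S G Ω)
    (hΩ : ∀ m, LowerTri (Ω m) ∧ IsUnit (Ω m).det) (hGdeg : ∀ m, (G m).natDegree = m)
    (hGlead : ∀ m, IsUnit ((G m).coeff m).det) :
    ∃ A B D : ℕ → Mat N, (∀ m, LowerTri (A m) ∧ IsUnit (A m).det) ∧
      (∀ m, 1 ≤ m → IsUnit (D m).det) ∧ ThreeTermRecurrence G A B D := by
  let A : ℕ → Mat N := fun m => (Ω m)⁻¹ * Ω (m + 1)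
  let D : ℕ → Mat N := fun m => ((G m).coeff m)⁻¹ * (G (m - 1)).coeff (m - 1)
  let lower : ℕ → MatPoly N := fun m => if m = 0 then 0 else G (m - 1) * C (A (m - 1))
  let B : ℕ → Mat N := fun m =>
    ((G m).coeff m)⁻¹ * (X * G m - G (m + 1) * C (D (m + 1)) - lower m).coeff m
  refine ⟨A, B, D, fun m => ⟨((hΩ m).1.inv (hΩ m).2).mul (hΩ (m + 1)).1, ?_⟩, fun m _ => ?_,
    fun m => ?_⟩
  · rw [det_mul]
    exact (isUnit_nonsing_inv_det _ (hΩ m).2).mul (hΩ (m + 1)).2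
  · rw [det_mul]
    exact (isUnit_nonsing_inv_det _ (hGlead m)).mul (hGlead (m - 1))
  have hlower : (lower m).degree < (m : ℕ) := by
    rw [Polynomial.degree_lt_iff_coeff_zero]
    intro j hj
    rcases Nat.eq_zero_or_pos m with rfl | hm
    · simp [lower]
    · simp only [lower, if_neg hm.ne', coeff_mul_C]
      rw [coeff_eq_zero_of_natDegree_lt (by rw [hGdeg]; omega), zero_mul]
  have htop : (X * G m - G (m + 1) * C (D (m + 1))).degree < ((m + 1 : ℕ) : WithBot ℕ) := by
    have hcoeff : (X * G m).coeff (m + 1) = (G m).coeff m := coeff_X_mul _ _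
    have := degree_sub_mul_C_inv_lt hGdeg hGlead (n := m + 1) (P := X * G m) (by
      rw [Polynomial.degree_lt_iff_coeff_zero]
      intro j hj
      obtain ⟨i, rfl⟩ : ∃ i, j = i + 1 := ⟨j - 1, by omega⟩
      rw [coeff_X_mul, coeff_eq_zero_of_natDegree_lt (by rw [hGdeg]; omega)])
    rwa [hcoeff] at this
  have hdeg := degree_sub_mul_C_inv_lt hGdeg hGlead (n := m)
    (P := X * G m - G (m + 1) * C (D (m + 1)) - lower m)
    ((degree_sub_le _ _).trans_lt (max_lt htop (hlower.trans (by exact_mod_cast m.lt_succ_self))))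
  have hzero := h.eq_zero_of_degree_lt (fun m => (hΩ m).2) hGdeg hGlead m _ hdeg (by
    intro k hk
    have hlow : momentFunctional S (X ^ k * lower m) = momentFunctional S (X ^ (k + 1) * G m) := by
      obtain ⟨n, rfl⟩ : ∃ n, m = n + 1 := ⟨m - 1, by omega⟩
      simp only [lower, if_neg n.succ_ne_zero, Nat.add_sub_cancel]
      rw [momentFunctional_X_pow_mul_mul_C]
      rcases (Nat.lt_succ_iff.1 hk).eq_or_lt with rfl | hk
      · rw [h.eq_self, h.eq_self, mul_nonsing_inv_cancel_left _ _ (hΩ k).2]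
      · rw [h.eq_zero hk, h.eq_zero (by omega), zero_mul]
    simp only [mul_sub, momentFunctional_sub, momentFunctional_X_pow_mul_mul_C, hlow,
      momentFunctional_X_pow_mul_X_mul, h.eq_zero hk, h.eq_zero (hk.trans m.lt_succ_self),
      zero_mul, sub_zero, sub_self])
  have hsplit : X * G m - G (m + 1) * C (D (m + 1)) - lower m - G m * C (B m) = 0 := hzero
  rw [sub_sub, sub_sub, sub_eq_zero] at hsplit
  rw [hsplit, add_comm, add_assoc]

/-- The moments of the functional sending `G 0` to `1` and every other `G m` to `0`. -/
def dualMoments (G : ℕ → MatPoly N) (m : ℕ) : Mat N :=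
  ((if m = 0 then 1 else 0) - ∑ j : Fin m, dualMoments G j * (G m).coeff j) * ((G m).coeff m)⁻¹

theorem momentFunctional_dualMoments (hGdeg : ∀ m, (G m).natDegree = m)
    (hGlead : ∀ m, IsUnit ((G m).coeff m).det) (m : ℕ) :
    momentFunctional (dualMoments G) (G m) = if m = 0 then 1 else 0 := by
  rw [momentFunctional_eq_sum_range _ (hGdeg m).le, Finset.sum_range_succ,
    ← Fin.sum_univ_eq_sum_range (fun j => dualMoments G j * (G m).coeff j), dualMoments.eq_1 G m,
    nonsing_inv_mul_cancel_right _ _ (hGlead m), add_sub_cancel]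

theorem ThreeTermRecurrence.momentFunctional_X_pow_succ_mul {A B D : ℕ → Mat N}
    (h : ThreeTermRecurrence G A B D) (S : ℕ → Mat N) (k m : ℕ) :
    momentFunctional S (X ^ (k + 1) * G (m + 1)) = momentFunctional S (X ^ k * G m) * A m
      + momentFunctional S (X ^ k * G (m + 1)) * B (m + 1)
      + momentFunctional S (X ^ k * G (m + 2)) * D (m + 2) := by
  rw [← momentFunctional_X_pow_mul_X_mul, h (m + 1), if_neg m.succ_ne_zero, mul_add, mul_add,
    momentFunctional_add, momentFunctional_add, momentFunctional_X_pow_mul_mul_C,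
    momentFunctional_X_pow_mul_mul_C, momentFunctional_X_pow_mul_mul_C, Nat.add_sub_cancel]

/-- The norms `A 0 * A 1 * ⋯ * A (m - 1)`. -/
def recurrenceNorm (A : ℕ → Mat N) : ℕ → Mat N
  | 0 => 1
  | m + 1 => recurrenceNorm A m * A m

theorem recurrenceNorm_lowerTri_isUnit {A : ℕ → Mat N}
    (hA : ∀ m, LowerTri (A m) ∧ IsUnit (A m).det) (m : ℕ) :
    LowerTri (recurrenceNorm A m) ∧ IsUnit (recurrenceNorm A m).det := by
  induction m with
  | zero => exact ⟨lowerTri_one, by simp [recurrenceNorm]⟩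
  | succ m ih =>
    refine ⟨ih.1.mul (hA m).1, ?_⟩
    rw [recurrenceNorm, det_mul]
    exact ih.2.mul (hA m).2

theorem ThreeTermRecurrence.rightOrthogonal {A B D : ℕ → Mat N}
    (h : ThreeTermRecurrence G A B D) (hGdeg : ∀ m, (G m).natDegree = m)
    (hGlead : ∀ m, IsUnit ((G m).coeff m).det) :
    RightOrthogonal (dualMoments G) G (recurrenceNorm A) := by
  intro m k
  induction k generalizing m with
  | zero =>
    intro _
    rw [pow_zero, one_mul, momentFunctional_dualMoments hGdeg hGlead]
    rcases Nat.eq_zero_or_pos m with rfl | hm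
    · simp [recurrenceNorm]
    · rw [if_neg hm.ne', if_neg hm.ne]
  | succ k ih =>
    intro hk
    obtain ⟨n, rfl⟩ : ∃ n, m = n + 1 := ⟨m - 1, by omega⟩
    rw [h.momentFunctional_X_pow_succ_mul, ih n (by omega), ih (n + 1) (by omega),
      ih (n + 2) (by omega), if_neg (by omega : k ≠ n + 1), if_neg (by omega : k ≠ n + 2),
      zero_mul, zero_mul, add_zero, add_zero]
    by_cases hkn : k = n
    · simp [hkn, recurrenceNorm]
    · simp [hkn]

theorem ThreeTermRecurrence.norm_succ {A B D S Ω : ℕ → Mat N}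
    (h : ThreeTermRecurrence G A B D) (hS : RightOrthogonal S G Ω) (m : ℕ) :
    Ω (m + 1) = Ω m * A m := by
  rw [← hS.eq_self (m + 1), h.momentFunctional_X_pow_succ_mul, hS.eq_self,
    hS.eq_zero m.lt_succ_self, hS.eq_zero (by omega : m < m + 2), zero_mul, zero_mul, add_zero,
    add_zero]

end Recurrence

theorem statement11
    (N : ℕ) (hN : 0 < N)
    (G : ℕ → MatPoly N) (hGdeg : ∀ m, (G m).natDegree = m)
    (hGlead : ∀ m, IsUnit ((G m).coeff m).det) (hG0 : G 0 = 1) :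
    -- (a) ⟺ (b)
    ((∃ (W : Polynomial ℝ →ₗ[ℝ] Mat N) (Ω : ℕ → Mat N),
        (∀ m, LowerTri (Ω m) ∧ IsUnit (Ω m).det) ∧
        (∀ m k, k ≤ m → rightPair N W (G m) m k = if k = m then Ω m else 0))
    ↔ (∃ A B C : ℕ → Mat N,
        (∀ m, LowerTri (A m) ∧ IsUnit (A m).det) ∧
        (∀ m, 1 ≤ m → IsUnit (C m).det) ∧
        (∀ m : ℕ, X * G m =
          (if m = 0 then 0 else G (m - 1) * Polynomial.C (A (m - 1)))
          + G m * Polynomial.C (B m) + G (m + 1) * Polynomial.C (C (m + 1))))) ∧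
    -- moreover, Ω_m = Ω_0 A_0 A_1 ⋯ A_{m-1}
    (∀ (W : Polynomial ℝ →ₗ[ℝ] Mat N) (Ω A B C : ℕ → Mat N),
      (∀ m, LowerTri (Ω m) ∧ IsUnit (Ω m).det) →
      (∀ m k, k ≤ m → rightPair N W (G m) m k = if k = m then Ω m else 0) →
      (∀ m, LowerTri (A m) ∧ IsUnit (A m).det) →
      (∀ m, 1 ≤ m → IsUnit (C m).det) →
      (∀ m : ℕ, X * G m =
        (if m = 0 then 0 else G (m - 1) * Polynomial.C (A (m - 1)))
        + G m * Polynomial.C (B m) + G (m + 1) * Polynomial.C (C (m + 1))) →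
      ∀ m, 1 ≤ m → Ω m = Ω (m - 1) * A (m - 1)) := by
  have horth : ∀ (W : ℝ[X] →ₗ[ℝ] Mat N) (Ω : ℕ → Mat N),
      (∀ m k, k ≤ m → rightPair N W (G m) m k = if k = m then Ω m else 0) ↔
        RightOrthogonal (fun i => W (X ^ i)) G Ω := fun W Ω => by
    simp only [RightOrthogonal, rightPair_eq_momentFunctional W (hGdeg _).le]
  refine ⟨⟨?_, ?_⟩, ?_⟩
  · rintro ⟨W, Ω, hΩ, hW⟩
    exact ((horth W Ω).1 hW).exists_threeTermRecurrence hΩ hGdeg hGlead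
  · rintro ⟨A, B, D, hA, -, hrec⟩
    refine ⟨(Polynomial.basisMonomials ℝ).constr ℝ (dualMoments G), recurrenceNorm A,
      recurrenceNorm_lowerTri_isUnit hA, (horth _ _).2 ?_⟩
    have hmom : (fun i => (Polynomial.basisMonomials ℝ).constr ℝ (dualMoments G) (X ^ i))
        = dualMoments G := by
      funext i
      rw [← (Polynomial.basisMonomials ℝ).constr_basis ℝ (dualMoments G) i,
        Polynomial.coe_basisMonomials]
      exact congrArg _ (Polynomial.monomial_one_right_eq_X_pow i).symm
    rw [hmom]
    exact ThreeTermRecurrence.rightOrthogonal hrec hGdeg hGlead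
  · intro W Ω A B D _ hW _ _ hrec m hm
    obtain ⟨n, rfl⟩ : ∃ n, m = n + 1 := ⟨m - 1, by omega⟩
    exact ThreeTermRecurrence.norm_succ hrec ((horth W Ω).1 hW) n
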